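/- Let f : ℝⁿ → ℝⁿ be continuously differentiable, h : ℝⁿ → ℝ continuously differentiable with ∇h(x) ≠ 0 for all x ∈ H, and H = {x ∈ ℝⁿ : h(x) = 0} with 0 ∈ H. Let x₁* = 0, x₂*, …, x_k* ∈ H be pairwise distinct and suppose {x ∈ H : f(x) = 0} = {x₁*, …, x_k*}. Assume: (a) for each j = 2, …, k there exist v ∈ ℝⁿ with v ≠ 0 and ⟨∇h(x_j*), v⟩ = 0, and λ > 0, such that Df(x_j*) v = λ v; (b) there is a continuously differentiable V : ℝⁿ → ℝ with V(0) = 0, V(x) > 0 for every x ∈ H with x ≠ 0, V radially unbounded on H (for every M > 0 there is R > 0 such that x ∈ H and ‖x‖ > R imply V(x) > M), and there exists ε > 0 with ⟨∇V(x), f(x)⟩ ≤ −ε · ∏_{i=1}^{k} ‖x − xᵢ*‖² for all x ∈ H. Then 0 is Lyapunov stable for solutions on H, and the set B = {x₀ ∈ H : there exists a global solution on H with x(0) = x₀ and x(t) does not converge to 0 as t → ∞} has (n−1)-dimensional Hausdorff measure zero. -/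

import Mathlib

open scoped RealInnerProductSpace

/-- A global solution on `H = {x | h x = 0}` of the autonomous system `ẋ = f(x)`:
a differentiable curve `x : [0,∞) → ℝⁿ` with `x′(t) = f(x(t))` and `x(t) ∈ H`
for all `t ≥ 0`. -/
def IsGlobalSolutionOn {n : ℕ}
    (f : EuclideanSpace ℝ (Fin n) → EuclideanSpace ℝ (Fin n))
    (h : EuclideanSpace ℝ (Fin n) → ℝ) (x : ℝ → EuclideanSpace ℝ (Fin n)) : Prop :=
  ∀ t : ℝ, 0 ≤ t → HasDerivWithinAt x (f (x t)) (Set.Ici 0) t ∧ h (x t) = 0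

open Set Filter Topology MeasureTheory Module
open scoped NNReal

section Calculus

/-- Mean value inequality on a subinterval of the half-line `[0, ∞)`. -/
lemma sub_le_mul_sub_of_hasDerivWithinAt_le {g g' : ℝ → ℝ} {a b C : ℝ}
    (hg : ∀ t, 0 ≤ t → HasDerivWithinAt g (g' t) (Ici 0) t) (ha : 0 ≤ a) (hab : a ≤ b)
    (hC : ∀ t ∈ Icc a b, g' t ≤ C) : g b - g a ≤ C * (b - a) := by
  have hderiv : ∀ t ∈ interior (Icc a b), HasDerivAt g (g' t) t := fun t ht => by
    rw [interior_Icc] at ht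
    have ht0 : 0 < t := ha.trans_lt ht.1
    exact (hg t ht0.le).hasDerivAt (Ici_mem_nhds ht0)
  refine (convex_Icc a b).image_sub_le_mul_sub_of_deriv_le
    (fun t ht => ((hg t (ha.trans ht.1)).continuousWithinAt).mono
      (Icc_subset_Ici_self.trans (Ici_subset_Ici.2 ha)))
    (fun t ht => (hderiv t ht).differentiableAt.differentiableWithinAt)
    (fun t ht => ?_) a (left_mem_Icc.2 hab) b (right_mem_Icc.2 hab) hab
  rw [(hderiv t ht).deriv]
  exact hC t (interior_subset ht)

/-- Lower Grönwall inequality on the half-line `[0, ∞)`. -/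
lemma mul_exp_le_of_mul_le_hasDerivWithinAt {g g' : ℝ → ℝ} {c t : ℝ}
    (hg : ∀ t, 0 ≤ t → HasDerivWithinAt g (g' t) (Ici 0) t)
    (hc : ∀ t, 0 ≤ t → c * g t ≤ g' t) (ht : 0 ≤ t) :
    g 0 * Real.exp (c * t) ≤ g t := by
  have hexp : ∀ s, HasDerivAt (fun s => Real.exp (-(c * s))) (Real.exp (-(c * s)) * -(c * 1)) s :=
    fun s => (((hasDerivAt_id s).const_mul c).neg).exp
  have key := sub_le_mul_sub_of_hasDerivWithinAt_le (g := fun s => -(g s * Real.exp (-(c * s))))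
    (fun s hs => ((hg s hs).mul (hexp s).hasDerivWithinAt).neg) le_rfl ht (C := 0)
    (fun s hs => by
      have := mul_le_mul_of_nonneg_right (hc s hs.1) (Real.exp_pos (-(c * s))).le
      linarith)
  have h1 : g 0 ≤ g t * Real.exp (-(c * t)) := by simpa using key
  calc g 0 * Real.exp (c * t)
      ≤ g t * Real.exp (-(c * t)) * Real.exp (c * t) := by gcongr
    _ = g t := by rw [mul_assoc, ← Real.exp_add]; simp

end Calculus

section LinearAlgebra

variable {E : Type*} [NormedAddCommGroup E] [InnerProductSpace ℝ E] [FiniteDimensional ℝ E]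

/-- A shifted Lyapunov equation has a solution for some shift in any interval `(0, b)`. -/
lemma exists_lyapunov_form (A : E →L[ℝ] E) {b : ℝ} (hb : 0 < b) :
    ∃ c ∈ Ioo 0 b, ∃ P : E →L[ℝ] E, ∀ w : E,
      ⟪P (A w), w⟫ + ⟪P w, A w⟫ = c * ⟪P w, w⟫ + ‖w‖ ^ 2 := by
  let L : Module.End ℝ (E →L[ℝ] E) :=
    { toFun := fun P => P ∘L A + (ContinuousLinearMap.adjoint A) ∘L P
      map_add' := fun P Q => by ext; simp; abel
      map_smul' := fun r P => by ext; simp }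
  obtain ⟨c, hc, hcL⟩ : ∃ c ∈ Ioo 0 b, c ∉ spectrum ℝ L :=
    ((Ioo_infinite hb).sdiff (Module.End.finite_spectrum L)).nonempty
  have hunit : IsUnit (algebraMap ℝ (Module.End ℝ (E →L[ℝ] E)) c - L) :=
    spectrum.notMem_iff.1 hcL
  obtain ⟨P, hP⟩ := ((Module.End.isUnit_iff _).1 hunit).surjective (-ContinuousLinearMap.id ℝ E)
  refine ⟨c, hc, P, fun w => ?_⟩
  have hw : c • P w - (P (A w) + ContinuousLinearMap.adjoint A (P w)) = -w := by
    simpa [L, Module.algebraMap_end_apply] using congrArg (fun Q : E →L[ℝ] E => Q w) hP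
  have := congrArg (fun u => ⟪u, w⟫) hw
  simp only [inner_sub_left, inner_add_left, inner_smul_left, inner_neg_left,
    ContinuousLinearMap.adjoint_inner_left, real_inner_self_eq_norm_sq, conj_trivial] at this
  linarith

/-- On the nonpositive cone of a quadratic form that is positive at `v ⟂ g`, a vector is controlled
by its `g`-component and its projection to the orthogonal complement of `g` and `v`. -/
lemma exists_pos_mul_norm_le_of_form_nonpos (P : E →L[ℝ] E) {g v : E} (hg : g ≠ 0)
    (hgv : ⟪g, v⟫ = 0) (hPv : 0 < ⟪P v, v⟫) :
    ∃ m > 0, ∀ w : E, ⟪P w, w⟫ ≤ 0 →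
      m * ‖w‖ ≤ ‖(Submodule.span ℝ {g, v})ᗮ.orthogonalProjectionOnto w‖ + |⟪g, w⟫| := by
  set π := (Submodule.span ℝ {g, v})ᗮ.orthogonalProjectionOnto with hπ
  let K : Set E := Metric.sphere 0 1 ∩ {w | ⟪P w, w⟫ ≤ 0}
  have hK : IsCompact K := (isCompact_sphere 0 1).inter_right
    (isClosed_le (by fun_prop) continuous_const)
  have hpos : ∀ w ∈ K, 0 < ‖π w‖ + |⟪g, w⟫| := by
    rintro w ⟨hw1, hw2⟩
    by_contra hle
    have h1 : ‖π w‖ = 0 := by linarith [norm_nonneg (π w), abs_nonneg ⟪g, w⟫]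
    have h2 : |⟪g, w⟫| = 0 := by linarith [norm_nonneg (π w), abs_nonneg ⟪g, w⟫]
    rw [norm_eq_zero, hπ, Submodule.orthogonalProjectionOnto_eq_zero_iff,
      Submodule.orthogonal_orthogonal, Submodule.mem_span_pair] at h1
    obtain ⟨a, b, rfl⟩ := h1
    rw [abs_eq_zero, inner_add_right, inner_smul_right, inner_smul_right, hgv, mul_zero, add_zero,
      real_inner_self_eq_norm_sq] at h2
    have ha : a = 0 := by simpa [hg] using h2
    subst ha
    have hb : b ≠ 0 := by
      rintro rfl
      simp at hw1
    have hPb : ⟪P (b • v), b • v⟫ = b ^ 2 * ⟪P v, v⟫ := by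
      simp [inner_smul_left, inner_smul_right]; ring
    simp only [zero_smul, zero_add, mem_ofPred_eq, hPb] at hw2
    have := mul_pos (pow_pos (abs_pos.2 hb) 2) hPv
    rw [sq_abs] at this
    linarith
  obtain ⟨m, hm, hmK⟩ : ∃ m > 0, ∀ w ∈ K, m ≤ ‖π w‖ + |⟪g, w⟫| := by
    rcases K.eq_empty_or_nonempty with hKe | hKne
    · exact ⟨1, one_pos, by simp [hKe]⟩
    · obtain ⟨w₀, hw₀, hmin⟩ := hK.exists_isMinOn hKne
        (f := fun w => ‖π w‖ + |⟪g, w⟫|) (by fun_prop)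
      exact ⟨_, hpos w₀ hw₀, fun w hw => hmin hw⟩
  refine ⟨m, hm, fun w hw => ?_⟩
  rcases eq_or_ne w 0 with rfl | hw0
  · simp
  have hn : 0 < ‖w‖ := norm_pos_iff.2 hw0
  have := hmK (‖w‖⁻¹ • w) ⟨by simp [norm_smul, hn.ne'], by
    simp only [mem_ofPred_eq, map_smul, inner_smul_left, inner_smul_right, conj_trivial]
    have := inv_pos.2 hn
    exact mul_nonpos_of_nonneg_of_nonpos this.le (mul_nonpos_of_nonneg_of_nonpos this.le hw)⟩
  rw [map_smul, norm_smul, inner_smul_right, abs_mul, norm_inv, norm_norm,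
    abs_of_pos (inv_pos.2 hn), ← mul_add, inv_mul_eq_div, le_div_iff₀ hn] at this
  exact this

/-- The orthogonal complement of two nonzero orthogonal vectors has codimension two. -/
lemma finrank_orthogonal_span_pair_add_two {g v : E} (hg : g ≠ 0) (hv : v ≠ 0)
    (hgv : ⟪g, v⟫ = 0) :
    finrank ℝ (Submodule.span ℝ {g, v})ᗮ + 2 = finrank ℝ E := by
  have hli : LinearIndependent ℝ ![g, v] := by
    refine linearIndependent_of_ne_zero_of_inner_eq_zero (𝕜 := ℝ) ?_ ?_
    · intro i; fin_cases i <;> simpa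
    · intro i j hij
      fin_cases i <;> fin_cases j <;> simp_all [real_inner_comm]
  have h2 := finrank_span_eq_card hli
  rw [Matrix.range_cons, Matrix.range_cons, Matrix.range_empty, union_empty, singleton_union,
    Fintype.card_fin] at h2
  have := (Submodule.span ℝ {g, v}).finrank_add_finrank_orthogonal
  omega

end LinearAlgebra

/-- A set with an antilipschitz map to a space of dimension below `d` is `d`-Hausdorff null. -/
lemma hausdorffMeasure_eq_zero_of_antilipschitz {X F : Type*} [MetricSpace X] [MeasurableSpace X]
    [BorelSpace X] [NormedAddCommGroup F] [NormedSpace ℝ F] [FiniteDimensional ℝ F]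
    {s : Set X} {K : ℝ≥0} {φ : s → F} (hφ : AntilipschitzWith K φ) {d : ℝ}
    (hd : finrank ℝ F < d) : Measure.hausdorffMeasure d s = 0 := by
  lift d to ℝ≥0 using (Nat.cast_nonneg _).trans hd.le
  refine hausdorffMeasure_of_dimH_lt ?_
  calc dimH s = dimH ((↑) '' (univ : Set s) : Set X) := by simp
    _ = dimH (univ : Set s) := isometry_subtype_coe.dimH_image _
    _ ≤ dimH (φ '' univ) := hφ.le_dimH_image _
    _ ≤ dimH (univ : Set F) := dimH_mono (subset_univ _)
    _ = finrank ℝ F := Real.dimH_univ_eq_finrank F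
    _ < d := by exact_mod_cast hd

section GlobalSolution

variable {n : ℕ} {f : EuclideanSpace ℝ (Fin n) → EuclideanSpace ℝ (Fin n)}
  {h V : EuclideanSpace ℝ (Fin n) → ℝ} {x y : ℝ → EuclideanSpace ℝ (Fin n)}

namespace IsGlobalSolutionOn

lemma continuousOn (hx : IsGlobalSolutionOn f h x) : ContinuousOn x (Ici 0) :=
  fun t ht => (hx t ht).1.continuousWithinAt

lemma shift (hx : IsGlobalSolutionOn f h x) {T : ℝ} (hT : 0 ≤ T) :
    IsGlobalSolutionOn f h (fun t => x (T + t)) := by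
  intro t ht
  refine ⟨?_, (hx (T + t) (by positivity)).2⟩
  have hadd : HasDerivWithinAt (fun t => T + t) 1 (Ici 0) t :=
    ((hasDerivAt_id t).const_add T).hasDerivWithinAt
  simpa [Function.comp_def] using (hx (T + t) (by positivity)).1.scomp t hadd
    (fun s (hs : 0 ≤ s) => show 0 ≤ T + s by positivity)

lemma hasDerivWithinAt_form_sub (hx : IsGlobalSolutionOn f h x) (hy : IsGlobalSolutionOn f h y)
    (P : EuclideanSpace ℝ (Fin n) →L[ℝ] EuclideanSpace ℝ (Fin n)) (t : ℝ) (ht : 0 ≤ t) :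
    HasDerivWithinAt (fun t => ⟪P (x t - y t), x t - y t⟫)
      (⟪P (x t - y t), f (x t) - f (y t)⟫ + ⟪P (f (x t) - f (y t)), x t - y t⟫) (Ici 0) t := by
  have hw := (hx t ht).1.sub (hy t ht).1
  exact (P.hasFDerivAt.comp_hasDerivWithinAt t hw).inner ℝ hw

/-- Backward Lipschitz dependence: two solutions that are close at time `T` were close at time `0`,
as long as both remain in a set where the vector field is Lipschitz. -/
lemma norm_sub_le_exp_mul (hx : IsGlobalSolutionOn f h x) (hy : IsGlobalSolutionOn f h y)
    {s : Set (EuclideanSpace ℝ (Fin n))} {L : ℝ≥0} (hf : LipschitzOnWith L f s)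
    (hxs : ∀ t, 0 ≤ t → x t ∈ s) (hys : ∀ t, 0 ≤ t → y t ∈ s) {T : ℝ} (hT : 0 ≤ T) :
    ‖x 0 - y 0‖ ≤ Real.exp (L * T) * ‖x T - y T‖ := by
  have key := mul_exp_le_of_mul_le_hasDerivWithinAt (c := -(2 * L))
    (hx.hasDerivWithinAt_form_sub hy (ContinuousLinearMap.id ℝ _)) (fun t ht => ?_) hT
  · simp only [ContinuousLinearMap.id_apply, real_inner_self_eq_norm_sq] at key
    refine le_of_sq_le_sq ?_ (by positivity)
    calc ‖x 0 - y 0‖ ^ 2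
        = ‖x 0 - y 0‖ ^ 2 * Real.exp (-(2 * L) * T) * Real.exp (L * T) ^ 2 := by
          rw [mul_assoc, ← Real.exp_nat_mul, ← Real.exp_add]
          ring_nf
          simp
      _ ≤ ‖x T - y T‖ ^ 2 * Real.exp (L * T) ^ 2 := by gcongr
      _ = _ := by ring
  · have h1 := hf.norm_sub_le (hxs t ht) (hys t ht)
    have h2 := abs_le.1 (abs_real_inner_le_norm (x t - y t) (f (x t) - f (y t)))
    have h3 := mul_le_mul_of_nonneg_left h1 (norm_nonneg (x t - y t))
    simp only [ContinuousLinearMap.id_apply, real_inner_self_eq_norm_sq,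
      real_inner_comm (x t - y t) (f (x t) - f (y t))]
    nlinarith [h2.1]

/-- Near an equilibrium whose linearisation has a positive eigenvalue with eigenvector tangent to
`{h = 0}`, two solutions remaining nearby are separated by a projection of corank two. -/
lemma _root_.exists_nhds_norm_sub_le_mul_orthogonalProjectionOnto
    {p v : EuclideanSpace ℝ (Fin n)} {lam : ℝ}
    (hf : ContDiff ℝ 1 f) (hh : ContDiff ℝ 1 h) (hg : gradient h p ≠ 0)
    (hv : v ≠ 0) (hgv : ⟪gradient h p, v⟫ = 0) (hlam : 0 < lam)
    (hfv : fderiv ℝ f p v = lam • v) :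
    ∃ U ∈ 𝓝 p, ∃ K : ℝ≥0, ∀ x y : ℝ → EuclideanSpace ℝ (Fin n),
      IsGlobalSolutionOn f h x → IsGlobalSolutionOn f h y →
      (∀ t, 0 ≤ t → x t ∈ U) → (∀ t, 0 ≤ t → y t ∈ U) →
      ‖x 0 - y 0‖ ≤
        K * ‖(Submodule.span ℝ {gradient h p, v})ᗮ.orthogonalProjectionOnto (x 0 - y 0)‖ := by
  set A := fderiv ℝ f p
  obtain ⟨c, ⟨hc0, hc⟩, P, hP⟩ := exists_lyapunov_form A (b := 2 * lam) (by positivity)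
  have hPv : 0 < ⟪P v, v⟫ := by
    have h1 := hP v
    rw [hfv, map_smul, inner_smul_left, inner_smul_right, conj_trivial] at h1
    have h2 : 0 < ‖v‖ ^ 2 := by positivity
    by_contra hle
    nlinarith
  obtain ⟨m, hm, hmw⟩ := exists_pos_mul_norm_le_of_form_nonpos P hg hgv hPv
  set η : ℝ≥0 := ⟨(2 * (‖P‖ + 1))⁻¹, by positivity⟩
  have hη : 2 * ‖P‖ * η ≤ 1 := by
    change 2 * ‖P‖ * (2 * (‖P‖ + 1))⁻¹ ≤ 1
    rw [← div_eq_mul_inv, div_le_one (by positivity)]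
    linarith
  have hη0 : 0 < η := show (0 : ℝ) < (2 * (‖P‖ + 1))⁻¹ by positivity
  obtain ⟨U₁, hU₁, hfU⟩ := (hf.contDiffAt.hasStrictFDerivAt
    one_ne_zero : HasStrictFDerivAt f A p).approximates_deriv_on_nhds (c := η) (Or.inr hη0)
  obtain ⟨U₂, hU₂, hhU⟩ := (hh.contDiffAt.hasStrictFDerivAt
    one_ne_zero : HasStrictFDerivAt h (fderiv ℝ h p) p).approximates_deriv_on_nhds
      (c := ⟨m / 2, by positivity⟩) (Or.inr (show 0 < m / 2 by positivity))
  refine ⟨U₁ ∩ U₂ ∩ Metric.ball p 1, inter_mem (inter_mem hU₁ hU₂) (Metric.ball_mem_nhds p one_pos),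
    ⟨2 / m, by positivity⟩, fun x y hx hy hxU hyU => ?_⟩
  have hgrowth : ∀ t, 0 ≤ t → c * ⟪P (x t - y t), x t - y t⟫ ≤
      ⟪P (x t - y t), f (x t) - f (y t)⟫ + ⟪P (f (x t) - f (y t)), x t - y t⟫ := by
    intro t ht
    have he := hfU _ (hxU t ht).1.1 _ (hyU t ht).1.1
    set w := x t - y t
    set e := f (x t) - f (y t) - A w
    have hfe : f (x t) - f (y t) = A w + e := by simp [e]
    have h1 : |⟪P w, e⟫| ≤ ‖P‖ * ‖w‖ * (η * ‖w‖) :=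
      (abs_real_inner_le_norm _ _).trans (by gcongr; exact P.le_opNorm w)
    have h2 : |⟪P e, w⟫| ≤ ‖P‖ * (η * ‖w‖) * ‖w‖ :=
      (abs_real_inner_le_norm _ _).trans (by gcongr; exact (P.le_opNorm e).trans (by gcongr))
    have h3 := mul_le_mul_of_nonneg_right hη (sq_nonneg ‖w‖)
    rw [hfe, map_add, inner_add_right, inner_add_left]
    nlinarith [hP w, (abs_le.1 h1).1, (abs_le.1 h2).1]
  have hQ : ⟪P (x 0 - y 0), x 0 - y 0⟫ ≤ 0 := by
    by_contra! hpos
    have hbound : ∀ t, 0 ≤ t →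
        ⟪P (x 0 - y 0), x 0 - y 0⟫ * Real.exp (c * t) ≤ ‖P‖ * 2 * 2 := by
      intro t ht
      have hw : ‖x t - y t‖ ≤ 2 := by
        have h1 := Metric.mem_ball.1 (hxU t ht).2
        have h2 := Metric.mem_ball.1 (hyU t ht).2
        rw [← dist_eq_norm]
        linarith [dist_triangle_right (x t) (y t) p]
      refine (mul_exp_le_of_mul_le_hasDerivWithinAt (hx.hasDerivWithinAt_form_sub hy P)
        hgrowth ht).trans ((real_inner_le_norm _ _).trans ?_)
      gcongr
      exact (P.le_opNorm _).trans (by gcongr)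
    have htend : Tendsto (fun t => ⟪P (x 0 - y 0), x 0 - y 0⟫ * Real.exp (c * t)) atTop atTop :=
      (Real.tendsto_exp_atTop.comp (tendsto_id.const_mul_atTop hc0)).const_mul_atTop hpos
    obtain ⟨t, ht, ht0⟩ := ((htend.eventually_gt_atTop (‖P‖ * 2 * 2)).and
      (eventually_ge_atTop 0)).exists
    exact absurd (hbound t ht0) (not_le.2 ht)
  have hgw : |⟪gradient h p, x 0 - y 0⟫| ≤ m / 2 * ‖x 0 - y 0‖ := by
    have := hhU _ (hxU 0 le_rfl).1.2 _ (hyU 0 le_rfl).1.2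
    rw [(hx 0 le_rfl).2, (hy 0 le_rfl).2, sub_zero, zero_sub, norm_neg, Real.norm_eq_abs] at this
    rwa [gradient, InnerProductSpace.toDual_symm_apply]
  have := hmw _ hQ
  change _ ≤ 2 / m * _
  rw [div_mul_eq_mul_div, le_div_iff₀ hm]
  linarith

lemma hasDerivWithinAt_comp (hx : IsGlobalSolutionOn f h x) (hV : ContDiff ℝ 1 V) (t : ℝ)
    (ht : 0 ≤ t) :
    HasDerivWithinAt (fun t => V (x t)) ⟪gradient V (x t), f (x t)⟫ (Ici 0) t := by
  have hd := (hV.differentiable one_ne_zero (x t)).hasFDerivAt.comp_hasDerivWithinAt t (hx t ht).1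
  rwa [← InnerProductSpace.toDual_symm_apply] at hd

/-- A function with nonpositive orbital derivative on `{h = 0}` decreases along solutions. -/
lemma antitoneOn_comp (hx : IsGlobalSolutionOn f h x) (hV : ContDiff ℝ 1 V)
    (hVdot : ∀ z, h z = 0 → ⟪gradient V z, f z⟫ ≤ 0) : AntitoneOn (fun t => V (x t)) (Ici 0) := by
  intro a ha b _ hab
  have := sub_le_mul_sub_of_hasDerivWithinAt_le (hx.hasDerivWithinAt_comp hV) ha hab
    (C := 0) (fun t ht => hVdot _ (hx t (le_trans ha ht.1)).2)
  simp only [zero_mul] at this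
  linarith

/-- Lyapunov stability of the origin for solutions on `{h = 0}`. -/
lemma _root_.exists_pos_forall_isGlobalSolutionOn_norm_lt (hh : Continuous h) (hV : ContDiff ℝ 1 V)
    (hV0 : V 0 = 0) (hVpos : ∀ z, h z = 0 → z ≠ 0 → 0 < V z)
    (hVdot : ∀ z, h z = 0 → ⟪gradient V z, f z⟫ ≤ 0) {r : ℝ} (hr : 0 < r) :
    ∃ δ > 0, ∀ x : ℝ → EuclideanSpace ℝ (Fin n),
      IsGlobalSolutionOn f h x → ‖x 0‖ < δ → ∀ t ≥ (0 : ℝ), ‖x t‖ < r := by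
  let S := Metric.sphere (0 : EuclideanSpace ℝ (Fin n)) r ∩ {z | h z = 0}
  have hS : IsCompact S := (isCompact_sphere 0 r).inter_right
    (isClosed_eq hh continuous_const)
  obtain ⟨m, hm, hmS⟩ : ∃ m > 0, ∀ z ∈ S, m ≤ V z := by
    rcases S.eq_empty_or_nonempty with hSe | hSne
    · exact ⟨1, one_pos, by simp [hSe]⟩
    · obtain ⟨z₀, hz₀, hmin⟩ := hS.exists_isMinOn hSne hV.continuous.continuousOn
      exact ⟨V z₀, hVpos z₀ hz₀.2 (ne_zero_of_mem_sphere hr.ne' ⟨z₀, hz₀.1⟩), fun z hz => hmin hz⟩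
  obtain ⟨δ, hδ, hδV⟩ := Metric.eventually_nhds_iff.1
    (hV.continuous.continuousAt.eventually (gt_mem_nhds (by rwa [hV0]) : ∀ᶠ s in 𝓝 (V 0), s < m))
  refine ⟨min δ r, lt_min hδ hr, fun x hx hx0 t ht => ?_⟩
  by_contra! hle
  obtain ⟨s, hs, hsr⟩ := intermediate_value_Icc ht
    ((hx.continuousOn.mono Icc_subset_Ici_self).norm)
    ⟨(hx0.trans_le (min_le_right _ _)).le, hle⟩
  have h1 := hmS (x s) ⟨by simpa using hsr, (hx s hs.1).2⟩
  have h2 := hx.antitoneOn_comp hV hVdot self_mem_Ici hs.1 hs.1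
  have h3 : V (x 0) < m := hδV (by simpa using hx0.trans_le (min_le_left _ _))
  simp only at h2
  linarith

/-- A bounded solution along which a Lyapunov function is bounded below and strictly decreasing away
from finitely many points converges to one of these points. -/
lemma exists_tendsto (hx : IsGlobalSolutionOn f h x) (hf : Continuous f) (hV : ContDiff ℝ 1 V)
    (hVnn : ∀ z, h z = 0 → 0 ≤ V z) {R : ℝ} (hR : ∀ t, 0 ≤ t → ‖x t‖ ≤ R)
    {k : ℕ} {p : Fin k → EuclideanSpace ℝ (Fin n)} (hp : Function.Injective p) {ε : ℝ}
    (hε : 0 < ε) (hVdot : ∀ z, h z = 0 →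
      ⟪gradient V z, f z⟫ ≤ -ε * ∏ i : Fin k, ‖z - p i‖ ^ 2) :
    ∃ j, Tendsto x atTop (𝓝 (p j)) := by
  have hVdot0 : ∀ z, h z = 0 → ⟪gradient V z, f z⟫ ≤ 0 := fun z hz => (hVdot z hz).trans <|
    mul_nonpos_of_nonpos_of_nonneg (neg_nonpos.2 hε.le)
      (Finset.prod_nonneg fun _ _ => by positivity)
  obtain ⟨M, hM⟩ : ∃ M, ∀ z ∈ Metric.closedBall (0 : EuclideanSpace ℝ (Fin n)) R, ‖f z‖ ≤ M :=
    (isCompact_closedBall 0 R).exists_bound_of_continuousOn hf.continuousOn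
  have hM0 : 0 ≤ M := (norm_nonneg _).trans (hM (x 0) (by simpa using hR 0 le_rfl))
  have hspeed : ∀ s t, 0 ≤ s → 0 ≤ t → ‖x t - x s‖ ≤ M * ‖t - s‖ := fun s t hs ht =>
    (convex_Ici 0).norm_image_sub_le_of_norm_hasDerivWithin_le (fun u hu => (hx u hu).1)
      (fun u hu => hM _ (by simpa using hR u hu)) hs ht
  obtain ⟨l, hl⟩ : ∃ l, Tendsto (fun t => V (x t)) atTop (𝓝 l) := by
    have hanti : Antitone fun t => V (x (max t 0)) := fun a b hab =>
      hx.antitoneOn_comp hV hVdot0 (le_max_right a 0) (le_max_right b 0) (max_le_max_right 0 hab)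
    refine ⟨_, (tendsto_atTop_ciInf hanti ⟨0, ?_⟩).congr' ?_⟩
    · rintro _ ⟨t, rfl⟩
      exact hVnn _ (hx _ (le_max_right t 0)).2
    · filter_upwards [eventually_ge_atTop 0] with t ht
      rw [max_eq_left ht]
  have hnear : ∀ ρ > 0, ∀ᶠ t in atTop, ∃ i, x t ∈ Metric.ball (p i) ρ := by
    intro ρ hρ
    set τ := ρ / (2 * (M + 1))
    have hτ : 0 < τ := by positivity
    set d := ε * ((ρ / 2) ^ 2) ^ k * τ
    have hd : 0 < d := by positivity
    have hdiff : Tendsto (fun t => V (x t) - V (x (t + τ))) atTop (𝓝 0) := by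
      simpa using hl.sub (hl.comp (tendsto_atTop_add_const_right _ τ tendsto_id))
    filter_upwards [hdiff.eventually (gt_mem_nhds hd), eventually_ge_atTop 0] with t ht ht0
    by_contra! hfar
    have hdec := sub_le_mul_sub_of_hasDerivWithinAt_le (hx.hasDerivWithinAt_comp hV) ht0
      (le_add_of_nonneg_right hτ.le) (C := -ε * ((ρ / 2) ^ 2) ^ k) (fun s hs => by
        have hs0 : 0 ≤ s := ht0.trans hs.1
        refine (hVdot _ (hx s hs0).2).trans ?_
        rw [neg_mul, neg_mul, neg_le_neg_iff]
        gcongr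
        rw [← Fin.prod_const]
        refine Finset.prod_le_prod (fun _ _ => by positivity) fun i _ => ?_
        gcongr
        have h1 : ρ ≤ ‖x t - p i‖ := by
          simpa [dist_eq_norm] using hfar i
        have h2 : ‖x s - x t‖ ≤ ρ / 2 := by
          refine (hspeed t s ht0 hs0).trans ?_
          have h3 : ‖s - t‖ ≤ τ := by
            rw [Real.norm_of_nonneg (sub_nonneg.2 hs.1)]; linarith [hs.2]
          calc M * ‖s - t‖ ≤ (M + 1) * τ := by gcongr; linarith
            _ = ρ / 2 := by simp only [τ]; field_simp
        have h4 : ‖x t - p i‖ ≤ ‖x s - p i‖ + ‖x s - x t‖ := by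
          rw [norm_sub_rev (x s) (x t), add_comm]
          exact norm_sub_le_norm_sub_add_norm_sub _ _ _
        linarith)
    simp only [add_sub_cancel_left] at hdec
    have : -ε * ((ρ / 2) ^ 2) ^ k * τ = -d := by simp only [d]; ring
    linarith
  obtain ⟨ρ₀, hρ₀, hsep⟩ : ∃ ρ₀ > 0, ∀ i j, i ≠ j →
      Disjoint (Metric.ball (p i) ρ₀) (Metric.ball (p j) ρ₀) := by
    have : ∀ᶠ ρ in 𝓝[>] (0 : ℝ), ∀ i j, i ≠ j →
        Disjoint (Metric.ball (p i) ρ) (Metric.ball (p j) ρ) := by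
      refine eventually_all.2 fun i => eventually_all.2 fun j => ?_
      rcases eq_or_ne i j with rfl | hij
      · simp
      have hdist : 0 < dist (p i) (p j) / 2 := by
        have := dist_pos.2 (hp.ne hij)
        positivity
      filter_upwards [Ioo_mem_nhdsGT hdist] with ρ hρ _
      exact Metric.ball_disjoint_ball (by linarith [hρ.2])
    obtain ⟨ρ, hρ, hρ0⟩ := (this.and self_mem_nhdsWithin).exists
    exact ⟨ρ, hρ0, hρ⟩
  obtain ⟨T, hT⟩ := eventually_atTop.1 ((hnear ρ₀ hρ₀).and (eventually_ge_atTop 0))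
  obtain ⟨j, hj⟩ := (hT T le_rfl).1
  have hstay : x '' Ici T ⊆ Metric.ball (p j) ρ₀ := by
    refine IsPreconnected.subset_left_of_subset_union (v := ⋃ i ≠ j, Metric.ball (p i) ρ₀)
      Metric.isOpen_ball (isOpen_biUnion fun _ _ => Metric.isOpen_ball) ?_ ?_
      ⟨x T, mem_image_of_mem x self_mem_Ici, hj⟩
      (isPreconnected_Ici.image x (hx.continuousOn.mono (Ici_subset_Ici.2 (hT T le_rfl).2)))
    · simp only [disjoint_iUnion_right]
      exact fun i hi => hsep j i hi.symm
    · rintro _ ⟨t, ht, rfl⟩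
      obtain ⟨i, hi⟩ := (hT t ht).1
      by_cases hij : i = j
      · exact Or.inl (hij ▸ hi)
      · exact Or.inr (mem_biUnion (show i ∈ {i | i ≠ j} from hij) hi)
  refine ⟨j, Metric.tendsto_nhds.2 fun ρ hρ => ?_⟩
  filter_upwards [hnear (min ρ ρ₀) (lt_min hρ hρ₀), eventually_ge_atTop T] with t ⟨i, hi⟩ ht
  have hij : i = j := by
    by_contra hne
    exact disjoint_left.1 (hsep i j hne) (Metric.ball_subset_ball (min_le_right _ _) hi)
      (hstay (mem_image_of_mem x ht))
  subst hij
  exact Metric.ball_subset_ball (min_le_left _ _) hi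

end IsGlobalSolutionOn

/-- The points of `{h = 0}` whose solutions converge inside `{h = 0}` to an equilibrium with an
unstable tangential eigendirection form a Hausdorff null set. -/
lemma hausdorffMeasure_setOf_tendsto_eq_zero {p v : EuclideanSpace ℝ (Fin n)} {lam : ℝ}
    (hf : ContDiff ℝ 1 f) (hh : ContDiff ℝ 1 h) (hg : gradient h p ≠ 0)
    (hv : v ≠ 0) (hgv : ⟪gradient h p, v⟫ = 0) (hlam : 0 < lam)
    (hfv : fderiv ℝ f p v = lam • v) :
    Measure.hausdorffMeasure ((n : ℝ) - 1)
      {x₀ : EuclideanSpace ℝ (Fin n) | ∃ x : ℝ → EuclideanSpace ℝ (Fin n),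
        IsGlobalSolutionOn f h x ∧ x 0 = x₀ ∧ Tendsto x atTop (𝓝 p)} = 0 := by
  obtain ⟨U, hU, K, hK⟩ :=
    exists_nhds_norm_sub_le_mul_orthogonalProjectionOnto hf hh hg hv hgv hlam hfv
  set S := (Submodule.span ℝ {gradient h p, v})ᗮ
  let W : ℕ × ℕ → Set (EuclideanSpace ℝ (Fin n)) := fun N => {x₀ | ∃ x, IsGlobalSolutionOn f h x ∧
    x 0 = x₀ ∧ (∀ t, 0 ≤ t → x t ∈ Metric.closedBall 0 (N.1 : ℝ)) ∧ ∀ t, (N.2 : ℝ) ≤ t → x t ∈ U}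
  have hW : ∀ N, Measure.hausdorffMeasure ((n : ℝ) - 1) (W N) = 0 := by
    rintro ⟨R, T⟩
    obtain ⟨L, hL⟩ := hf.contDiffOn.exists_lipschitzOnWith one_ne_zero
      (convex_closedBall (0 : EuclideanSpace ℝ (Fin n)) R) (isCompact_closedBall 0 (R : ℝ))
    choose! γ hγ hγ0 hγR hγU using fun x₀ (hx₀ : x₀ ∈ W (R, T)) => hx₀
    refine hausdorffMeasure_eq_zero_of_antilipschitz
      (φ := fun x₀ : W (R, T) => S.orthogonalProjectionOnto (γ x₀ T))
      (K := (Real.exp (L * T)).toNNReal * K) (AntilipschitzWith.of_le_mul_dist ?_) ?_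
    · rintro ⟨a, ha⟩ ⟨b, hb⟩
      have h1 := (hγ a ha).norm_sub_le_exp_mul (hγ b hb) hL (hγR a ha) (hγR b hb) T.cast_nonneg
      have h2 := hK _ _ ((hγ a ha).shift T.cast_nonneg) ((hγ b hb).shift T.cast_nonneg)
        (fun t ht => hγU a ha _ (le_add_of_nonneg_right ht))
        (fun t ht => hγU b hb _ (le_add_of_nonneg_right ht))
      rw [hγ0 a ha, hγ0 b hb] at h1
      rw [add_zero, map_sub] at h2
      rw [Subtype.dist_eq, dist_eq_norm, dist_eq_norm, NNReal.coe_mul, mul_assoc,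
        Real.coe_toNNReal _ (Real.exp_pos _).le]
      exact h1.trans (mul_le_mul_of_nonneg_left h2 (Real.exp_pos _).le)
    · have := finrank_orthogonal_span_pair_add_two hg hv hgv
      rw [finrank_euclideanSpace_fin] at this
      have hn : (finrank ℝ S : ℝ) + 2 = n := by exact_mod_cast this
      linarith
  refine measure_mono_null ?_ (measure_iUnion_null hW)
  rintro x₀ ⟨x, hx, hx0, hlim⟩
  obtain ⟨T, hT⟩ := eventually_atTop.1 (hlim.eventually hU)
  obtain ⟨T', hT'⟩ := exists_nat_ge T
  obtain ⟨T₁, hT₁⟩ := eventually_atTop.1 (hlim.eventually (Metric.ball_mem_nhds p one_pos))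
  obtain ⟨C, hC⟩ := (isCompact_Icc (a := (0 : ℝ)) (b := T₁)).exists_bound_of_continuousOn
    (hx.continuousOn.mono Icc_subset_Ici_self)
  obtain ⟨R, hR⟩ := exists_nat_ge (max C (1 + ‖p‖))
  refine mem_iUnion.2 ⟨(R, T'), x, hx, hx0, fun t ht => ?_, fun t ht => hT t (hT'.trans ht)⟩
  rw [mem_closedBall_zero_iff]
  rcases le_total t T₁ with h1 | h1
  · exact (hC t ⟨ht, h1⟩).trans ((le_max_left _ _).trans hR)
  · have h2 : dist (x t) p < 1 := hT₁ t h1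
    rw [dist_eq_norm] at h2
    have h3 := (le_max_right C (1 + ‖p‖)).trans hR
    have h4 : ‖x t‖ ≤ ‖p‖ + ‖x t - p‖ := by simpa using norm_add_le p (x t - p)
    linarith

end GlobalSolution

theorem stmt_1 (n k : ℕ) (hk : 0 < k)
    (f : EuclideanSpace ℝ (Fin n) → EuclideanSpace ℝ (Fin n)) (hf : ContDiff ℝ 1 f)
    (h : EuclideanSpace ℝ (Fin n) → ℝ) (hh : ContDiff ℝ 1 h)
    (h0 : h 0 = 0)
    (hgrad_ne : ∀ x, h x = 0 → gradient h x ≠ 0)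
    (xs : Fin k → EuclideanSpace ℝ (Fin n))
    (hxs0 : xs ⟨0, hk⟩ = 0)
    (hxsH : ∀ i, h (xs i) = 0)
    (hxs_distinct : Function.Injective xs)
    (hxs_eq : {x | h x = 0 ∧ f x = 0} = Set.range xs)
    -- (a) each other equilibrium has an unstable eigendirection tangent to `H`
    (hunstable : ∀ j : Fin k, j ≠ ⟨0, hk⟩ →
      ∃ v : EuclideanSpace ℝ (Fin n), v ≠ 0 ∧ ⟪gradient h (xs j), v⟫ = 0 ∧
        ∃ lam : ℝ, 0 < lam ∧ fderiv ℝ f (xs j) v = lam • v)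
    -- (b) Lyapunov function
    (V : EuclideanSpace ℝ (Fin n) → ℝ) (hV : ContDiff ℝ 1 V)
    (hV0 : V 0 = 0)
    (hVpos : ∀ x, h x = 0 → x ≠ 0 → 0 < V x)
    (hVrad : ∀ M > 0, ∃ R > 0, ∀ x, h x = 0 → R < ‖x‖ → M < V x)
    (ε : ℝ) (hε : 0 < ε)
    (hVdot : ∀ x, h x = 0 →
      ⟪gradient V x, f x⟫ ≤ -ε * ∏ i : Fin k, ‖x - xs i‖ ^ 2) :
    -- Lyapunov stability of 0 for solutions on H
    (∀ r > 0, ∃ δ > 0, ∀ x : ℝ → EuclideanSpace ℝ (Fin n),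
        IsGlobalSolutionOn f h x → ‖x 0‖ < δ → ∀ t ≥ (0 : ℝ), ‖x t‖ < r) ∧
    -- the set of initial conditions on H not converging to 0 is Hausdorff-null
    MeasureTheory.Measure.hausdorffMeasure ((n : ℝ) - 1)
      {x₀ : EuclideanSpace ℝ (Fin n) | h x₀ = 0 ∧
        ∃ x : ℝ → EuclideanSpace ℝ (Fin n), IsGlobalSolutionOn f h x ∧ x 0 = x₀ ∧
          ¬ Filter.Tendsto x Filter.atTop (nhds 0)} = 0 := by
  have hVdot0 : ∀ z, h z = 0 → ⟪gradient V z, f z⟫ ≤ 0 := fun z hz => (hVdot z hz).trans <|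
    mul_nonpos_of_nonpos_of_nonneg (neg_nonpos.2 hε.le)
      (Finset.prod_nonneg fun _ _ => by positivity)
  have hVnn : ∀ z, h z = 0 → 0 ≤ V z := fun z hz => by
    rcases eq_or_ne z 0 with rfl | hz0
    · exact hV0.ge
    · exact (hVpos z hz hz0).le
  refine ⟨fun r hr => exists_pos_forall_isGlobalSolutionOn_norm_lt hh.continuous hV hV0 hVpos
    hVdot0 hr, ?_⟩
  let W : {j : Fin k // j ≠ ⟨0, hk⟩} → Set (EuclideanSpace ℝ (Fin n)) := fun j =>
    {x₀ | ∃ x : ℝ → EuclideanSpace ℝ (Fin n),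
      IsGlobalSolutionOn f h x ∧ x 0 = x₀ ∧ Tendsto x atTop (𝓝 (xs j))}
  have hW : ∀ j, Measure.hausdorffMeasure ((n : ℝ) - 1) (W j) = 0 := fun ⟨j, hj⟩ => by
    obtain ⟨v, hv, hgv, lam, hlam, hfv⟩ := hunstable j hj
    exact hausdorffMeasure_setOf_tendsto_eq_zero hf hh (hgrad_ne _ (hxsH j)) hv hgv hlam hfv
  refine measure_mono_null ?_ (measure_iUnion_null hW)
  rintro x₀ ⟨_, x, hx, hx0, hlim⟩
  obtain ⟨R, -, hR⟩ := hVrad (V (x 0) + 1) (by linarith [hVnn _ (hx 0 le_rfl).2])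
  obtain ⟨j, hj⟩ := hx.exists_tendsto hf.continuous hV hVnn (R := R) (fun t ht => by
    by_contra! hlt
    have h1 := hR _ (hx t ht).2 hlt
    have h2 : V (x t) ≤ V (x 0) := hx.antitoneOn_comp hV hVdot0 self_mem_Ici ht ht
    linarith) hxs_distinct hε hVdot
  refine mem_iUnion.2 ⟨⟨j, ?_⟩, x, hx, hx0, hj⟩
  rintro rfl
  exact hlim (hxs0 ▸ hj)
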